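/- Let (A, φ) be a noncommutative probability space with Boolean cumulants {b_n}. Then for every n ≥ 1 and all a_1,…,a_n ∈ A, b_n(a_1,…,a_n) = Σ_{t ∈ BST(n)} (−1)^{i(t)−1} φ_{π(t)}(a_1,…,a_n). -/

import Mathlib

open scoped BigOperators

/-- Planar rooted trees (rose trees). -/
inductive PTree : Type
  | node : List PTree → PTree

namespace PTree

/-- The single-vertex tree (a leaf). -/
abbrev leaf : PTree := .node []

/-- Subtree at a given path from the root (entries select children). -/
def subtreeAt : List ℕ → PTree → Option PTree
  | [], t => some t
  | i :: p, node cs => (cs[i]?).bind (subtreeAt p)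

/-- `p` is (the path of) a vertex of `t`. -/
def IsVertex (t : PTree) (p : List ℕ) : Prop := (subtreeAt p t).isSome

/-- `p` is a leaf of `t`. -/
def IsLeafAt (t : PTree) (p : List ℕ) : Prop := subtreeAt p t = some leaf

/-- `p` is an internal (non-leaf) vertex of `t`. -/
def IsInternalAt (t : PTree) (p : List ℕ) : Prop :=
  ∃ cs, subtreeAt p t = some (node cs) ∧ cs ≠ []

/-- Schröder trees: every internal vertex has at least two children. -/
inductive IsSchroder : PTree → Prop
  | leaf : IsSchroder (node [])
  | node (cs : List PTree) : 2 ≤ cs.length → (∀ c ∈ cs, IsSchroder c) → IsSchroder (node cs)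

/-- Number of leaves of a tree. -/
noncomputable def numLeaves (t : PTree) : ℕ := Nat.card {p : List ℕ // IsLeafAt t p}

/-- Number of sectors between consecutive leaves. -/
noncomputable def numSectors (t : PTree) : ℕ := numLeaves t - 1

/-- Number of internal vertices. -/
noncomputable def numInternal (t : PTree) : ℕ := Nat.card {p : List ℕ // IsInternalAt t p}

/-- The set of Schröder trees with `n+1` leaves. -/
def ST (n : ℕ) : Set PTree := {t | IsSchroder t ∧ numLeaves t = n + 1}

/-- Number of surjective strictly order-preserving maps from the poset of internal
vertices of `t` (i.e. the vertex poset of the skeleton `sk(t)`, with the root minimal,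
the order being the ancestor/prefix order) onto `{1, …, k}`. This is `ω_k(sk(t))`. -/
noncomputable def omegaSkK (t : PTree) (k : ℕ) : ℕ :=
  Nat.card {f : {p : List ℕ // IsInternalAt t p} → Fin k //
    Function.Surjective f ∧ ∀ v w, v.1 <+: w.1 → v ≠ w → f v < f w}

/-- The Murua coefficient `ω(sk(t))` of the skeleton of `t`. -/
noncomputable def omegaSk (t : PTree) : ℂ :=
  ∑ k ∈ Finset.Icc 1 (numInternal t), ((-1 : ℂ) ^ (k + 1) / (k : ℂ)) * (omegaSkK t k : ℂ)

/-- The subtree of `t` at path `p` (junk value: a leaf). -/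
noncomputable def subtree! (t : PTree) (p : List ℕ) : PTree := (subtreeAt p t).getD leaf

/-- Number of leaves of `t` strictly to the left of the subtree at `p`. -/
noncomputable def leavesBefore (t : PTree) (p : List ℕ) : ℕ :=
  Nat.card {q : List ℕ // IsLeafAt t q ∧ List.Lex (· < ·) q p ∧ ¬ p <+: q}

/-- Sector number `i` (0-indexed: the sector between the `(i+1)`-st and `(i+2)`-nd leaves of `t`)
lies strictly inside the subtree of `t` rooted at `p`. -/
def SectorIn (t : PTree) (p : List ℕ) (i : ℕ) : Prop :=
  leavesBefore t p ≤ i ∧ i + 2 ≤ leavesBefore t p + numLeaves (subtree! t p)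

/-- The internal vertex `v` of `t` owns sector `i`: the sector lies in the corolla at `v`,
i.e. inside the subtree at `v` but not inside the subtree at any strictly deeper vertex. -/
def OwnsSector (t : PTree) (v : List ℕ) (i : ℕ) : Prop :=
  IsInternalAt t v ∧ SectorIn t v i ∧
    ∀ w, IsInternalAt t w → v <+: w → w ≠ v → ¬ SectorIn t w i

/-- Sectors `i` and `j` belong to the same block of the noncrossing partition `π(t)`. -/
def SameOwner (t : PTree) (i j : ℕ) : Prop := ∃ v, OwnsSector t v i ∧ OwnsSector t v j

open Classical in
/-- `φ_{π(t)}(a_1,…,a_n)`: the product over the blocks of the noncrossing partition `π(t)`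
(one block per internal vertex `v`, consisting of the sectors owned by `v`) of `φ` applied to
the ordered product of the corresponding letters of `w`. -/
noncomputable def phiPi {A : Type*} [Ring A] (φ : A → ℂ) (t : PTree) (w : List A) : ℂ :=
  ∏ᶠ v ∈ {v : List ℕ | IsInternalAt t v},
    φ ((((List.range w.length).filter fun i => OwnsSector t v i).map fun i => w.getD i 0).prod)

/-- A corolla: a root whose (at least two) children are all leaves. -/
def corolla (m : ℕ) : PTree := node (List.replicate m leaf)

/-- `t` is a corolla. -/
def IsCorolla (t : PTree) : Prop := ∃ m, 2 ≤ m ∧ t = corolla m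

/-- Graft a tree `s` onto the leftmost leaf of `t`. -/
def graftLeftmost : PTree → PTree → PTree
  | node [], s => s
  | node (c :: cs), s => node (graftLeftmost c s :: cs)

/-- Trees obtained from the single-vertex tree by repeatedly grafting a corolla
onto the leftmost leaf. -/
inductive IsBST : PTree → Prop
  | single : IsBST leaf
  | graft (t : PTree) (m : ℕ) : IsBST t → 2 ≤ m → IsBST (graftLeftmost t (corolla m))

/-- Schröder trees whose leftmost child of the root is a leaf. -/
def IsPST (t : PTree) : Prop := ∃ cs, t = node (leaf :: cs)

end PTree
section Partitions

open scoped BigOperators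

/-- Set partitions of `[n] = {1,…,n}`, modeled as finpartitions of `Fin n`. -/
abbrev NPart (n : ℕ) := Finpartition (Finset.univ : Finset (Fin n))

/-- Noncrossing partitions: there are no `a < b < c < d` with `a, c` in one block and
`b, d` in a different block. -/
def IsNoncrossing {n : ℕ} (π : NPart n) : Prop :=
  ∀ a b c d : Fin n, a < b → b < c → c < d →
    ∀ V ∈ π.parts, ∀ W ∈ π.parts, a ∈ V → c ∈ V → b ∈ W → d ∈ W → V = W

/-- Interval partitions: every block is an interval of consecutive elements. -/
def IsIntervalPart {n : ℕ} (π : NPart n) : Prop :=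
  ∀ V ∈ π.parts, ∀ x ∈ V, ∀ y ∈ V, ∀ z : Fin n, x ≤ z → z ≤ y → z ∈ V

/-- Irreducible noncrossing partitions: `1` and `n` lie in the same block. -/
def IsIrreducibleNC {n : ℕ} (π : NPart n) : Prop :=
  ∃ V ∈ π.parts, (∀ i : Fin n, i.val = 0 → i ∈ V) ∧ (∀ i : Fin n, i.val = n - 1 → i ∈ V)

/-- `W` is nested in `V`: every element of `W` lies in the interval `[min V, max V]`. -/
def NestedIn {n : ℕ} (W V : Finset (Fin n)) : Prop :=
  ∀ w ∈ W, (∃ a ∈ V, a ≤ w) ∧ (∃ b ∈ V, w ≤ b)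

open Classical in
/-- The forest factorial `t(π)!` of the forest of nestings of `π`: the product, over all
blocks `V`, of the number of blocks nested in `V` (the size of the subtree rooted at `V`). -/
noncomputable def forestFactorial {n : ℕ} (π : NPart n) : ℕ :=
  ∏ V ∈ π.parts, (π.parts.filter fun W => NestedIn W V).card

/-- `f_π(a_1,…,a_n)`: the product over the blocks `V = {i_1 < … < i_s}` of `π` of
`f(a_{i_1},…,a_{i_s})`, for a family of multilinear functionals encoded as `f : List A → ℂ`. -/
noncomputable def blockApply {A : Type*} {n : ℕ} (f : List A → ℂ) (a : Fin n → A)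
    (π : NPart n) : ℂ :=
  ∏ V ∈ π.parts, f ((V.sort (· ≤ ·)).map a)

/-- `φ_π(a_1,…,a_n)` for the moment functionals `φ_m(a_1,…,a_m) = φ(a_1 ⋯ a_m)`. -/
noncomputable def momApply {A : Type*} [Ring A] {n : ℕ} (φ : A → ℂ) (a : Fin n → A)
    (π : NPart n) : ℂ :=
  blockApply (fun l => φ l.prod) a π

/-- `ω_k(t(π))` for the nesting poset of the blocks of `π` (for irreducible `π`, this is
the vertex poset of the tree of nestings, rooted at the outermost block): the number of
surjective strictly order-preserving maps onto `{1,…,k}`. -/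
noncomputable def omegaNestK {n : ℕ} (π : NPart n) (k : ℕ) : ℕ :=
  Nat.card {f : {V // V ∈ π.parts} → Fin k // Function.Surjective f ∧
    ∀ V W : {V // V ∈ π.parts}, NestedIn W.1 V.1 → V ≠ W → f V < f W}

/-- The Murua coefficient `ω(t(π))` of the tree (forest) of nestings of `π`. -/
noncomputable def omegaNest {n : ℕ} (π : NPart n) : ℂ :=
  ∑ k ∈ Finset.Icc 1 π.parts.card, ((-1 : ℂ) ^ (k + 1) / (k : ℂ)) * (omegaNestK π k : ℂ)

/-- The noncrossing partition `π(t)` associated to a Schröder tree `t ∈ ST(n)` equals `π`: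
two sectors lie in the same block of `π(t)` (i.e. have the same owning internal vertex)
iff they lie in the same block of `π`. -/
def TreePartEq {n : ℕ} (t : PTree) (π : NPart n) : Prop :=
  ∀ i j : Fin n, PTree.SameOwner t i.val j.val ↔ ∃ V ∈ π.parts, i ∈ V ∧ j ∈ V

/-- The moment–cumulant relation defining the monotone cumulants `h`. -/
def MonotoneMC {A : Type*} [Ring A] (φ : A → ℂ) (h : List A → ℂ) : Prop :=
  ∀ (m : ℕ), 1 ≤ m → ∀ a : Fin m → A,
    φ (List.ofFn a).prod =
      ∑ᶠ π ∈ {π : NPart m | IsNoncrossing π}, (forestFactorial π : ℂ)⁻¹ * blockApply h a π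

/-- The moment–cumulant relation defining the free cumulants `r`. -/
def FreeMC {A : Type*} [Ring A] (φ : A → ℂ) (r : List A → ℂ) : Prop :=
  ∀ (m : ℕ), 1 ≤ m → ∀ a : Fin m → A,
    φ (List.ofFn a).prod = ∑ᶠ π ∈ {π : NPart m | IsNoncrossing π}, blockApply r a π

/-- The moment–cumulant relation defining the Boolean cumulants `b`. -/
def BooleanMC {A : Type*} [Ring A] (φ : A → ℂ) (b : List A → ℂ) : Prop :=
  ∀ (m : ℕ), 1 ≤ m → ∀ a : Fin m → A,
    φ (List.ofFn a).prod = ∑ᶠ π ∈ {π : NPart m | IsIntervalPart π}, blockApply b a π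

end Partitions

/-!
A sum over interval partitions of a word is a sum over its factorizations into consecutive nonempty
factors. Cutting off the last factor, `φ_n = ∑_{π ∈ Int(n)} b_π` becomes
`φ(a_1 ⋯ a_n) = ∑_{k < n} φ(a_1 ⋯ a_k) b(a_{k+1}, …, a_n)`, with the empty moment read as `1`.
Cutting off the first factor, the signed sum `S = ∑_{π ∈ Int(n)} (-1)^{|π|} φ_π` satisfies
`S(a_1, …, a_n) = -∑_{0 < k ≤ n} φ(a_1 ⋯ a_k) S(a_{k+1}, …, a_n)`, with `S() = 1`. Comparing the
two recursions gives `b = -S` by induction on `n`. The trees of `BST(n)` are left combs: the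
corollas along the left spine, from bottom to top, give the blocks of `π(t)` from left to right, so
that `t ↦ π(t)` is a bijection onto `Int(n)` with `i(t) = |π(t)|`.
-/

section Compositions

theorem sum_composition_cons {M : Type*} [AddCommMonoid M] (g : List ℕ → M) {n : ℕ} (hn : 0 < n) :
    ∑ c : Composition n, g c.blocks =
      ∑ k ∈ Finset.range n, ∑ c : Composition (n - (k + 1)), g ((k + 1) :: c.blocks) := by
  rw [Finset.sum_sigma']
  symm
  refine Finset.sum_bij
    (fun p hp => ⟨(p.1 + 1) :: p.2.blocks, by simp +contextual [or_imp, p.2.blocks_pos], ?_⟩)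
    ?_ ?_ ?_ ?_
  · have := Finset.mem_range.1 (Finset.mem_sigma.1 hp).1
    rw [List.sum_cons, p.2.blocks_sum]
    omega
  · exact fun _ _ => Finset.mem_univ _
  · rintro ⟨k, c⟩ _ ⟨k', c'⟩ _ h
    simp only [Composition.mk.injEq, List.cons.injEq, add_left_inj] at h
    obtain ⟨rfl, h⟩ := h
    rw [Composition.ext h]
  · rintro ⟨_ | ⟨m, ms⟩, hpos, hsum⟩ _
    · simp only [List.sum_nil] at hsum
      omega
    · obtain ⟨k, rfl⟩ := Nat.exists_eq_add_one.2 (hpos List.mem_cons_self)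
      rw [List.sum_cons] at hsum
      exact ⟨⟨k, ms, fun h => hpos (List.mem_cons_of_mem _ h), by omega⟩,
        by simp; omega, rfl⟩
  · exact fun _ _ => rfl

theorem sum_composition_reverse {M : Type*} [AddCommMonoid M] (g : List ℕ → M) (n : ℕ) :
    ∑ c : Composition n, g c.blocks.reverse = ∑ c : Composition n, g c.blocks :=
  Composition.reverse_bijective.sum_comp fun c : Composition n => g c.blocks

theorem sum_composition_append_singleton {M : Type*} [AddCommMonoid M] (g : List ℕ → M) {n : ℕ}
    (hn : 0 < n) :
    ∑ c : Composition n, g c.blocks =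
      ∑ k ∈ Finset.range n, ∑ c : Composition k, g (c.blocks ++ [n - k]) := by
  calc ∑ c : Composition n, g c.blocks
    _ = ∑ k ∈ Finset.range n, ∑ c : Composition (n - (k + 1)),
          g ((k + 1) :: c.blocks).reverse := by
      rw [← sum_composition_reverse, sum_composition_cons (fun ms => g ms.reverse) hn]
    _ = ∑ k ∈ Finset.range n, ∑ c : Composition (n - (k + 1)), g (c.blocks ++ [k + 1]) := by
      refine Finset.sum_congr rfl fun k _ => ?_
      simp only [List.reverse_cons]
      exact sum_composition_reverse (fun ms => g (ms ++ [k + 1])) _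
    _ = ∑ k ∈ Finset.range n, ∑ c : Composition k, g (c.blocks ++ [n - k]) := by
      rw [← Finset.sum_range_reflect _ n]
      refine Finset.sum_congr rfl fun k hk => ?_
      have hk := Finset.mem_range.1 hk
      rw [show n - 1 - k + 1 = n - k by omega, Nat.sub_sub_self hk.le]

theorem splitWrtCompositionAux_append_singleton {A : Type*} (l : List A) (ms : List ℕ) (m : ℕ) :
    l.splitWrtCompositionAux (ms ++ [m]) =
      (l.take ms.sum).splitWrtCompositionAux ms ++ [(l.drop ms.sum).take m] := by
  induction ms generalizing l with
  | nil => simp [List.splitWrtCompositionAux]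
  | cons k ms ih =>
    simp [List.splitWrtCompositionAux_cons, ih, List.take_take, List.drop_take, List.drop_drop]

variable {A R : Type*}

/-- The sum of `f w₁ * ⋯ * f wₖ` over all factorizations `l = w₁ ⋯ wₖ` into nonempty words. With the
interval partitions of `[n]` encoded as compositions of `n`, it is `∑_{π ∈ Int(n)} f_π(a_1, …, a_n)`
for `l = [a_1, …, a_n]`. -/
noncomputable def compositionSum [Semiring R] (f : List A → R) (l : List A) : R :=
  ∑ c : Composition l.length, ((l.splitWrtComposition c).map f).prod

section Semiring

variable [Semiring R] (f : List A → R)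

theorem compositionSum_of_length_eq {l : List A} {n : ℕ} (h : l.length = n) :
    compositionSum f l =
      ∑ c : Composition n, ((l.splitWrtCompositionAux c.blocks).map f).prod := by
  subst h
  rfl

theorem compositionSum_nil : compositionSum f [] = 1 := by
  have : Subsingleton (Composition 0) :=
    Fintype.card_le_one_iff_subsingleton.1 (composition_card 0).le
  rw [compositionSum_of_length_eq f List.length_nil, Fintype.sum_subsingleton _ default]
  rfl

theorem compositionSum_eq_sum_take_mul {l : List A} (hl : l ≠ []) :
    compositionSum f l =
      ∑ k ∈ Finset.range l.length, f (l.take (k + 1)) * compositionSum f (l.drop (k + 1)) := by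
  rw [compositionSum_of_length_eq f rfl,
    sum_composition_cons (fun ms => ((l.splitWrtCompositionAux ms).map f).prod)
      (List.length_pos_iff.2 hl)]
  refine Finset.sum_congr rfl fun k _ => ?_
  rw [compositionSum_of_length_eq f List.length_drop, Finset.mul_sum]
  simp only [List.splitWrtCompositionAux_cons, List.map_cons, List.prod_cons]

theorem compositionSum_eq_sum_mul_drop {l : List A} (hl : l ≠ []) :
    compositionSum f l =
      ∑ k ∈ Finset.range l.length, compositionSum f (l.take k) * f (l.drop k) := by
  rw [compositionSum_of_length_eq f rfl,
    sum_composition_append_singleton (fun ms => ((l.splitWrtCompositionAux ms).map f).prod)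
      (List.length_pos_iff.2 hl)]
  refine Finset.sum_congr rfl fun k hk => ?_
  have hk : (l.take k).length = k := List.length_take_of_le (Finset.mem_range.1 hk).le
  rw [compositionSum_of_length_eq f hk, Finset.sum_mul]
  refine Finset.sum_congr rfl fun c _ => ?_
  rw [splitWrtCompositionAux_append_singleton, c.blocks_sum,
    List.take_of_length_le List.length_drop.le, List.map_append, List.prod_append,
    List.map_singleton, List.prod_singleton]

end Semiring

theorem compositionSum_neg [Ring R] (f : List A → R) (l : List A) :
    compositionSum (-f) l = ∑ c : Composition l.length,
      (-1) ^ c.length * ((l.splitWrtComposition c).map f).prod := by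
  refine Finset.sum_congr rfl fun c _ => ?_
  have h := ((l.splitWrtComposition c).map f).prod_map_neg
  rwa [List.map_map, List.length_map, List.length_splitWrtComposition] at h

theorem eq_neg_compositionSum_neg [Ring R] {m b : List A → R}
    (h : ∀ l ≠ [], m l = compositionSum b l) (l : List A) (hl : l ≠ []) :
    b l = -compositionSum (-m) l := by
  induction hn : l.length using Nat.strong_induction_on generalizing l with
  | _ N ih =>
    obtain ⟨n, rfl⟩ : ∃ n, N = n + 1 := Nat.exists_eq_add_one.2 (hn ▸ List.length_pos_iff.2 hl)
    have hm : m l = ∑ k ∈ Finset.range n, m (l.take (k + 1)) * b (l.drop (k + 1)) + b l := by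
      rw [h l hl, compositionSum_eq_sum_mul_drop b hl, hn, Finset.sum_range_succ',
        List.take_zero, compositionSum_nil, one_mul, List.drop_zero]
      congr 1
      exact Finset.sum_congr rfl fun k _ => by rw [h _ (by simp [hl])]
    have hneg : compositionSum (-m) l =
        ∑ k ∈ Finset.range n, m (l.take (k + 1)) * b (l.drop (k + 1)) - m l := by
      rw [compositionSum_eq_sum_take_mul _ hl, hn, Finset.sum_range_succ, ← hn, List.take_length,
        List.drop_length, compositionSum_nil, mul_one, Pi.neg_apply, sub_eq_add_neg]
      congr 1
      refine Finset.sum_congr rfl fun k hk => ?_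
      have hk := Finset.mem_range.1 hk
      rw [ih (l.length - (k + 1)) (by omega) (l.drop (k + 1)) (by simp; omega) (by simp),
        Pi.neg_apply, neg_mul, mul_neg]
    rw [hneg, hm]
    abel

end Compositions

section IntervalPartitions

variable {α R : Type*} [LinearOrder α] {s : Finset α} {x y : α}

/-- Interval partitions of a finite subset `s` of a linear order: with two elements of `s`, a block
contains all the elements of `s` between them. -/
def IsIntervalFinpartition (π : Finpartition s) : Prop :=
  ∀ V ∈ π.parts, ∀ x ∈ V, ∀ y ∈ V, ∀ z ∈ s, x ≤ z → z ≤ y → z ∈ V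

/-- The partition of `s` with first block `{y ∈ s | y ≤ x}`, followed by the blocks of `σ`. Every
interval partition of a nonempty `s` arises so from a unique `x`, the maximum of its first block. -/
def consBlock (hx : x ∈ s) (σ : Finpartition {y ∈ s | x < y}) : Finpartition s :=
  σ.extend (b := {y ∈ s | y ≤ x}) (Finset.ne_empty_of_mem (Finset.mem_filter.2 ⟨hx, le_rfl⟩))
    (by simpa only [not_lt] using Finset.disjoint_filter_filter_not s s (x < ·))
    (by simpa only [not_lt, Finset.sup_eq_union] using Finset.filter_union_filter_not_eq (x < ·) s)

theorem consBlock_parts (hx : x ∈ s) (σ : Finpartition {y ∈ s | x < y}) :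
    (consBlock hx σ).parts = insert {y ∈ s | y ≤ x} σ.parts := rfl

theorem lt_of_mem_part (σ : Finpartition {y ∈ s | x < y}) {V : Finset α} (hV : V ∈ σ.parts)
    (hy : y ∈ V) : x < y :=
  (Finset.mem_filter.1 (σ.le hV hy)).2

theorem firstBlock_notMem_parts (hx : x ∈ s) (σ : Finpartition {y ∈ s | x < y}) :
    {y ∈ s | y ≤ x} ∉ σ.parts :=
  fun h => (lt_of_mem_part σ h (Finset.mem_filter.2 ⟨hx, le_rfl⟩)).false

theorem isIntervalFinpartition_consBlock_iff (hx : x ∈ s) (σ : Finpartition {y ∈ s | x < y}) :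
    IsIntervalFinpartition (consBlock hx σ) ↔ IsIntervalFinpartition σ := by
  simp only [IsIntervalFinpartition, consBlock_parts, Finset.forall_mem_insert, Finset.mem_filter]
  constructor
  · exact fun h V hV u hu v hv z hz => h.2 V hV u hu v hv z hz.1
  · refine fun h => ⟨fun u _ v hv z hz _ hzv => ⟨hz, hzv.trans hv.2⟩, ?_⟩
    exact fun V hV u hu v hv z hz huz hzv =>
      h V hV u hu v hv z ⟨hz, (lt_of_mem_part σ hV hu).trans_le huz⟩ huz hzv

theorem le_of_consBlock_eq {hx : x ∈ s} {hy : y ∈ s} {σ : Finpartition {z ∈ s | x < z}}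
    {τ : Finpartition {z ∈ s | y < z}} (h : consBlock hx σ = consBlock hy τ) : y ≤ x := by
  have hmem : {z ∈ s | z ≤ y} ∈ (consBlock hx σ).parts := by
    rw [h, consBlock_parts]
    exact Finset.mem_insert_self _ _
  rw [consBlock_parts, Finset.mem_insert] at hmem
  rcases hmem with heq | hσ
  · have : y ∈ ({z ∈ s | z ≤ x} : Finset α) := heq ▸ Finset.mem_filter.2 ⟨hy, le_rfl⟩
    exact (Finset.mem_filter.1 this).2
  · have hxy : x < y := lt_of_mem_part σ hσ (Finset.mem_filter.2 ⟨hy, le_rfl⟩)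
    exact absurd (lt_of_mem_part σ hσ (Finset.mem_filter.2 ⟨hx, hxy.le⟩)) (lt_irrefl x)

theorem consBlock_injective (hx : x ∈ s) : Function.Injective (consBlock hx) := by
  intro σ τ h
  have h := congrArg (fun π => π.parts.erase {z ∈ s | z ≤ x}) h
  simp only [consBlock_parts, Finset.erase_insert (firstBlock_notMem_parts hx _)] at h
  exact Finpartition.ext h

theorem exists_consBlock_eq (hx : x ∈ s) (π : Finpartition s) (h : {y ∈ s | y ≤ x} ∈ π.parts) :
    ∃ σ, consBlock hx σ = π := by
  refine ⟨π.ofSubset (Finset.erase_subset {y ∈ s | y ≤ x} _) ?_,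
    Finpartition.ext (Finset.insert_erase h)⟩
  ext z
  simp only [Finset.mem_sup, Finset.mem_erase, id_eq, Finset.mem_filter]
  constructor
  · rintro ⟨V, ⟨hne, hV⟩, hz⟩
    refine ⟨π.le hV hz, lt_of_not_ge fun hzx => hne ?_⟩
    exact π.eq_of_mem_parts hV h hz (Finset.mem_filter.2 ⟨π.le hV hz, hzx⟩)
  · rintro ⟨hz, hxz⟩
    obtain ⟨V, hV, hzV⟩ := π.exists_mem hz
    refine ⟨V, ⟨?_, hV⟩, hzV⟩
    rintro rfl
    exact hxz.not_ge (Finset.mem_filter.1 hzV).2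

theorem IsIntervalFinpartition.exists_firstBlock_mem {π : Finpartition s}
    (hπ : IsIntervalFinpartition π) (hs : s.Nonempty) : ∃ x ∈ s, {y ∈ s | y ≤ x} ∈ π.parts := by
  obtain ⟨V, hV, hmin⟩ := π.exists_mem (s.min'_mem hs)
  have hne : V.Nonempty := ⟨_, hmin⟩
  refine ⟨V.max' hne, π.le hV (V.max'_mem hne), ?_⟩
  convert hV
  ext y
  rw [Finset.mem_filter]
  exact ⟨fun hy => hπ V hV _ hmin _ (V.max'_mem hne) y hy.1 (s.min'_le y hy.1) hy.2,
    fun hy => ⟨π.le hV hy, V.le_max' y hy⟩⟩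

variable [CommSemiring R]

open Classical in
/-- The sum, over the interval partitions of `s`, of the product of `f` over the blocks. -/
noncomputable def intervalSum (f : Finset α → R) (s : Finset α) : R :=
  ∑ π : Finpartition s with IsIntervalFinpartition π, ∏ V ∈ π.parts, f V

theorem intervalSum_empty (f : Finset α → R) : intervalSum f ∅ = 1 := by
  have : Unique (Finpartition (∅ : Finset α)) :=
    inferInstanceAs (Unique (Finpartition (⊥ : Finset α)))
  have hparts (π : Finpartition (∅ : Finset α)) : π.parts = ∅ := π.parts_eq_empty_iff.2 rfl
  simp [intervalSum, IsIntervalFinpartition, hparts]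

theorem intervalSum_eq_sum (f : Finset α → R) (hs : s.Nonempty) :
    intervalSum f s = ∑ x ∈ s, f {y ∈ s | y ≤ x} * intervalSum f {y ∈ s | x < y} := by
  classical
  simp only [intervalSum, Finset.mul_sum]
  rw [Finset.sum_sigma']
  symm
  refine Finset.sum_bij (fun p hp => consBlock (Finset.mem_sigma.1 hp).1 p.2) ?_ ?_ ?_ ?_
  · simp [isIntervalFinpartition_consBlock_iff]
  · rintro ⟨x, σ⟩ _ ⟨y, τ⟩ _ h
    obtain rfl : x = y := le_antisymm (le_of_consBlock_eq h.symm) (le_of_consBlock_eq h)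
    obtain rfl : σ = τ := consBlock_injective _ h
    rfl
  · intro π hπ
    have hπ := (Finset.mem_filter.1 hπ).2
    obtain ⟨x, hx, hmem⟩ := hπ.exists_firstBlock_mem hs
    obtain ⟨σ, rfl⟩ := exists_consBlock_eq hx π hmem
    exact ⟨⟨x, σ⟩, by simpa [hx] using (isIntervalFinpartition_consBlock_iff hx σ).1 hπ, rfl⟩
  · intro p hp
    rw [consBlock_parts, Finset.prod_insert (firstBlock_notMem_parts (Finset.mem_sigma.1 hp).1 _)]

theorem sort_filter (s : Finset α) (p : α → Prop) [DecidablePred p] :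
    (s.filter p).sort = s.sort.filter (p ·) := by
  have hsort : (s.sort.filter (p ·)).Pairwise (· < ·) := s.sortedLT_sort.pairwise.filter _
  rw [← (List.toFinset_sort (· ≤ ·) hsort.nodup).2 (hsort.imp le_of_lt), List.toFinset_filter,
    Finset.sort_toFinset]
  simp only [decide_eq_true_eq]

theorem filter_le_append_cons_of_pairwise_lt {l₁ l₂ : List α}
    (h : (l₁ ++ x :: l₂).Pairwise (· < ·)) :
    (l₁ ++ x :: l₂).filter (· ≤ x) = l₁ ++ [x] := by
  obtain ⟨-, h₂, h₁⟩ := List.pairwise_append.1 h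
  have hl₁ : l₁.filter (· ≤ x) = l₁ :=
    List.filter_eq_self.2 fun y hy => decide_eq_true (h₁ y hy x List.mem_cons_self).le
  have hl₂ : l₂.filter (· ≤ x) = [] := List.filter_eq_nil_iff.2 fun y hy => by
    simpa only [decide_eq_true_eq, not_le] using List.rel_of_pairwise_cons h₂ hy
  simp only [List.filter_append, List.filter_cons, hl₁, hl₂, le_rfl, decide_true, if_true]

theorem filter_lt_append_cons_of_pairwise_lt {l₁ l₂ : List α}
    (h : (l₁ ++ x :: l₂).Pairwise (· < ·)) :
    (l₁ ++ x :: l₂).filter (x < ·) = l₂ := by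
  obtain ⟨-, h₂, h₁⟩ := List.pairwise_append.1 h
  have hl₁ : l₁.filter (x < ·) = [] := List.filter_eq_nil_iff.2 fun y hy => by
    simpa only [decide_eq_true_eq, not_lt] using (h₁ y hy x List.mem_cons_self).le
  have hl₂ : l₂.filter (x < ·) = l₂ :=
    List.filter_eq_self.2 fun y hy => decide_eq_true (List.rel_of_pairwise_cons h₂ hy)
  simp [hl₁, hl₂]

theorem sort_eq_take_append_orderEmbOfFin_cons_drop (s : Finset α) (k : Fin s.card) :
    s.sort = s.sort.take k ++ s.orderEmbOfFin rfl k :: s.sort.drop (k + 1) := by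
  rw [Finset.orderEmbOfFin_apply, Fin.getElem_fin, ← List.drop_eq_getElem_cons,
    List.take_append_drop]

theorem sort_filter_le_orderEmbOfFin (s : Finset α) (k : Fin s.card) :
    Finset.sort {y ∈ s | y ≤ s.orderEmbOfFin rfl k} = s.sort.take (k + 1) := by
  have hsplit := sort_eq_take_append_orderEmbOfFin_cons_drop s k
  have hsort := s.sortedLT_sort.pairwise
  rw [hsplit] at hsort
  rw [sort_filter, hsplit, filter_le_append_cons_of_pairwise_lt hsort, ← hsplit,
    Finset.orderEmbOfFin_apply, Fin.getElem_fin, List.take_concat_get']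

theorem sort_filter_orderEmbOfFin_lt (s : Finset α) (k : Fin s.card) :
    Finset.sort {y ∈ s | s.orderEmbOfFin rfl k < y} = s.sort.drop (k + 1) := by
  have hsplit := sort_eq_take_append_orderEmbOfFin_cons_drop s k
  have hsort := s.sortedLT_sort.pairwise
  rw [hsplit] at hsort
  rw [sort_filter, hsplit, filter_lt_append_cons_of_pairwise_lt hsort, ← hsplit]

theorem sum_eq_sum_orderEmbOfFin {M : Type*} [AddCommMonoid M] (s : Finset α) (g : α → M) :
    ∑ x ∈ s, g x = ∑ k : Fin s.card, g (s.orderEmbOfFin rfl k) := by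
  conv_lhs => rw [← s.map_orderEmbOfFin_univ rfl, Finset.sum_map]
  rfl

theorem intervalSum_sort_map_eq_compositionSum {A : Type*} (f : List A → R) (a : α → A)
    (s : Finset α) :
    intervalSum (fun V => f (V.sort.map a)) s = compositionSum f (s.sort.map a) := by
  induction s using Finset.strongInduction with
  | H s ih =>
    rcases s.eq_empty_or_nonempty with rfl | hs
    · rw [intervalSum_empty, Finset.sort_empty, List.map_nil, compositionSum_nil]
    · have hl : s.sort.map a ≠ [] := by
        simpa [← List.length_eq_zero_iff] using hs.ne_empty
      have hlen : (s.sort.map a).length = s.card := by simp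
      rw [intervalSum_eq_sum _ hs, sum_eq_sum_orderEmbOfFin, compositionSum_eq_sum_take_mul f hl,
        hlen, Finset.sum_range]
      refine Finset.sum_congr rfl fun k _ => ?_
      rw [ih _ (Finset.filter_ssubset.2 ⟨_, s.orderEmbOfFin_mem rfl k, lt_irrefl _⟩),
        sort_filter_le_orderEmbOfFin, sort_filter_orderEmbOfFin_lt, List.map_take, List.map_drop]

end IntervalPartitions

namespace PTree

section Vertices

variable {t : PTree} {p : List ℕ}

theorem subtreeAt_append (p q : List ℕ) (t : PTree) :
    subtreeAt (p ++ q) t = (subtreeAt p t).bind (subtreeAt q) := by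
  induction p generalizing t with
  | nil => rfl
  | cons i p ih =>
    obtain ⟨cs⟩ := t
    simp only [List.cons_append, subtreeAt, Option.bind_assoc, ih]

theorem IsLeafAt.isVertex (h : IsLeafAt t p) : IsVertex t p :=
  Option.isSome_iff_exists.2 ⟨_, h⟩

theorem IsInternalAt.isVertex : IsInternalAt t p → IsVertex t p := fun ⟨_, h, _⟩ =>
  Option.isSome_iff_exists.2 ⟨_, h⟩

theorem finite_setOf_isVertex : ∀ t : PTree, {p | IsVertex t p}.Finite
  | node cs => by
    have hfin : (insert [] (⋃ i : Fin cs.length,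
        List.cons (i : ℕ) '' {p | IsVertex cs[i] p})).Finite :=
      (Set.finite_iUnion fun i => (finite_setOf_isVertex cs[i]).image _).insert _
    refine hfin.subset ?_
    rintro (_ | ⟨i, p⟩) hp
    · exact Set.mem_insert _ _
    · obtain ⟨s, hs⟩ := Option.isSome_iff_exists.1 hp
      obtain ⟨c, hc, hcs⟩ := Option.bind_eq_some_iff.1 hs
      obtain ⟨hi, rfl⟩ := List.getElem?_eq_some_iff.1 hc
      exact Or.inr (Set.mem_iUnion.2 ⟨⟨i, hi⟩, p, Option.isSome_iff_exists.2 ⟨s, hcs⟩, rfl⟩)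
termination_by t => t
decreasing_by
  have hlt : sizeOf cs[i] < sizeOf cs := List.sizeOf_get cs i
  rw [node.sizeOf_spec]
  omega

theorem finite_setOf_isLeafAt (t : PTree) : {p | IsLeafAt t p}.Finite :=
  t.finite_setOf_isVertex.subset fun _ => IsLeafAt.isVertex

theorem finite_setOf_isInternalAt (t : PTree) : {p | IsInternalAt t p}.Finite :=
  t.finite_setOf_isVertex.subset fun _ => IsInternalAt.isVertex

theorem numLeaves_eq_ncard (t : PTree) : numLeaves t = {p | IsLeafAt t p}.ncard := rfl

theorem numInternal_eq_ncard (t : PTree) : numInternal t = {p | IsInternalAt t p}.ncard := rfl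

theorem subtreeAt_leaf_eq_some_iff {s : PTree} :
    subtreeAt p leaf = some s ↔ p = [] ∧ s = leaf := by
  cases p <;> simp [subtreeAt, eq_comm]

theorem numLeaves_leaf : numLeaves leaf = 1 := by
  simp [numLeaves_eq_ncard, IsLeafAt, subtreeAt_leaf_eq_some_iff]

theorem numInternal_leaf : numInternal leaf = 0 := by
  simp [numInternal_eq_ncard, IsInternalAt, subtreeAt_leaf_eq_some_iff]

theorem isInternalAt_nil_iff : IsInternalAt t [] ↔ t ≠ leaf := by
  obtain ⟨cs⟩ := t
  simp [IsInternalAt, subtreeAt]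

theorem leavesBefore_nil (t : PTree) : leavesBefore t [] = 0 := by
  simp [leavesBefore]

theorem leavesBefore_add_numLeaves_le (hp : IsVertex t p) :
    leavesBefore t p + numLeaves (subtree! t p) ≤ numLeaves t := by
  obtain ⟨s, hs⟩ := Option.isSome_iff_exists.1 hp
  have hbelow : (p ++ ·) '' {q | IsLeafAt s q} ⊆ {q | IsLeafAt t q} := by
    rintro _ ⟨q, hq, rfl⟩
    change subtreeAt (p ++ q) t = some leaf
    rwa [subtreeAt_append, hs]
  have hdisj : Disjoint {q | IsLeafAt t q ∧ List.Lex (· < ·) q p ∧ ¬ p <+: q}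
      ((p ++ ·) '' {q | IsLeafAt s q}) := by
    rw [Set.disjoint_left]
    rintro _ ⟨-, -, hnot⟩ ⟨q, -, rfl⟩
    exact hnot (List.prefix_append p q)
  calc leavesBefore t p + numLeaves (subtree! t p)
    _ = {q | IsLeafAt t q ∧ List.Lex (· < ·) q p ∧ ¬ p <+: q}.ncard +
          ((p ++ ·) '' {q | IsLeafAt s q}).ncard := by
      rw [Set.ncard_image_of_injective _ (List.append_right_injective p), subtree!, hs]
      rfl
    _ = ({q | IsLeafAt t q ∧ List.Lex (· < ·) q p ∧ ¬ p <+: q} ∪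
          (p ++ ·) '' {q | IsLeafAt s q}).ncard :=
      (Set.ncard_union_eq hdisj (t.finite_setOf_isLeafAt.subset fun _ => And.left)
        (s.finite_setOf_isLeafAt.image _)).symm
    _ ≤ numLeaves t :=
      Set.ncard_le_ncard (Set.union_subset (fun _ => And.left) hbelow) t.finite_setOf_isLeafAt

theorem exists_isInternalAt_sectorIn_iff {i : ℕ} :
    (∃ p, IsInternalAt t p ∧ SectorIn t p i) ↔ i + 2 ≤ numLeaves t := by
  constructor
  · rintro ⟨p, hp, -, hi⟩
    exact hi.trans (leavesBefore_add_numLeaves_le hp.isVertex)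
  · intro hi
    refine ⟨[], isInternalAt_nil_iff.2 ?_, ?_⟩
    · rintro rfl
      rw [numLeaves_leaf] at hi
      omega
    · simpa [SectorIn, leavesBefore_nil, subtree!, subtreeAt] using hi

end Vertices

/-- The tree whose root has leftmost child `t`, followed by `m` leaves; the trees of `BST(n)` are
built from the bottom up by iterating it. -/
def addRoot (t : PTree) (m : ℕ) : PTree := node (t :: List.replicate m leaf)

section AddRoot

variable {t : PTree} {m k i : ℕ} {p : List ℕ}

theorem subtreeAt_addRoot_zero_cons : subtreeAt (0 :: p) (addRoot t m) = subtreeAt p t := rfl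

theorem subtreeAt_addRoot_succ_cons_eq_some_iff {s : PTree} :
    subtreeAt ((k + 1) :: p) (addRoot t m) = some s ↔ k < m ∧ p = [] ∧ s = leaf := by
  simp [subtreeAt, addRoot, List.getElem?_replicate, subtreeAt_leaf_eq_some_iff,
    Option.bind_eq_some_iff]

theorem setOf_isLeafAt_addRoot (t : PTree) (m : ℕ) :
    {p | IsLeafAt (addRoot t m) p} =
      List.cons 0 '' {p | IsLeafAt t p} ∪ (fun k => [k + 1]) '' Set.Iio m := by
  ext (_ | ⟨_ | k, p⟩)
  · simp [IsLeafAt, addRoot, subtreeAt]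
  · simp [IsLeafAt, subtreeAt_addRoot_zero_cons]
  · simp [IsLeafAt, subtreeAt_addRoot_succ_cons_eq_some_iff, eq_comm (a := ([] : List ℕ))]

theorem setOf_isInternalAt_addRoot (t : PTree) (m : ℕ) :
    {p | IsInternalAt (addRoot t m) p} = insert [] (List.cons 0 '' {p | IsInternalAt t p}) := by
  ext (_ | ⟨_ | k, p⟩)
  · simp [isInternalAt_nil_iff, addRoot]
  · simp [IsInternalAt, subtreeAt_addRoot_zero_cons]
  · simp [IsInternalAt, subtreeAt_addRoot_succ_cons_eq_some_iff]

theorem numLeaves_addRoot (t : PTree) (m : ℕ) : numLeaves (addRoot t m) = numLeaves t + m := by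
  have hdisj : Disjoint (List.cons 0 '' {p | IsLeafAt t p})
      ((fun k => [k + 1]) '' Set.Iio m) := by
    rw [Set.disjoint_left]
    rintro _ ⟨p, -, rfl⟩ ⟨k, -, h⟩
    simp at h
  rw [numLeaves_eq_ncard, setOf_isLeafAt_addRoot,
    Set.ncard_union_eq hdisj (t.finite_setOf_isLeafAt.image _) ((Set.finite_Iio m).image _),
    Set.ncard_image_of_injective _ List.cons_injective,
    Set.ncard_image_of_injective _ fun _ _ => by simp, numLeaves_eq_ncard,
    ← Finset.coe_Iio, Set.ncard_coe_finset, Nat.card_Iio]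

theorem numInternal_addRoot (t : PTree) (m : ℕ) :
    numInternal (addRoot t m) = numInternal t + 1 := by
  have hroot : [] ∉ List.cons 0 '' {p | IsInternalAt t p} := by simp
  rw [numInternal_eq_ncard, setOf_isInternalAt_addRoot,
    Set.ncard_insert_of_notMem hroot (t.finite_setOf_isInternalAt.image _),
    Set.ncard_image_of_injective _ List.cons_injective, numInternal_eq_ncard]

theorem leavesBefore_addRoot_zero_cons :
    leavesBefore (addRoot t m) (0 :: p) = leavesBefore t p := by
  have hset : {q | IsLeafAt (addRoot t m) q ∧ List.Lex (· < ·) q (0 :: p) ∧ ¬ 0 :: p <+: q} =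
      List.cons 0 '' {q | IsLeafAt t q ∧ List.Lex (· < ·) q p ∧ ¬ p <+: q} := by
    ext (_ | ⟨_ | k, q⟩)
    · simp [IsLeafAt, addRoot, subtreeAt]
    · simp [IsLeafAt, subtreeAt_addRoot_zero_cons]
    · have hlex : ¬ List.Lex (· < ·) ((k + 1) :: q) (0 :: p) := by
        simp only [List.cons_lex_cons_iff, Nat.not_lt_zero, Nat.succ_ne_zero, false_and, or_self,
          not_false_eq_true]
      exact iff_of_false (fun h => hlex h.2.1) (by simp)
  exact (congrArg Set.ncard hset).trans (Set.ncard_image_of_injective _ List.cons_injective)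

theorem sectorIn_addRoot_zero_cons_iff : SectorIn (addRoot t m) (0 :: p) i ↔ SectorIn t p i := by
  rw [SectorIn, leavesBefore_addRoot_zero_cons, subtree!, subtreeAt_addRoot_zero_cons]
  rfl

theorem forall_isInternalAt_addRoot_iff {P : List ℕ → Prop} :
    (∀ p, IsInternalAt (addRoot t m) p → P p) ↔ P [] ∧ ∀ p, IsInternalAt t p → P (0 :: p) := by
  change (∀ p ∈ {p | IsInternalAt (addRoot t m) p}, P p) ↔ _
  rw [setOf_isInternalAt_addRoot, Set.forall_mem_insert, Set.forall_mem_image]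
  rfl

theorem ownsSector_addRoot_zero_cons_iff :
    OwnsSector (addRoot t m) (0 :: p) i ↔ OwnsSector t p i := by
  have hnil : ¬ 0 :: p <+: [] := by simp
  simp only [OwnsSector, forall_isInternalAt_addRoot_iff, sectorIn_addRoot_zero_cons_iff, hnil,
    List.cons_prefix_cons, ne_eq, List.cons.injEq, true_and, false_imp_iff]
  rfl

theorem ownsSector_addRoot_nil_iff :
    OwnsSector (addRoot t m) [] i ↔ numLeaves t ≤ i + 1 ∧ i + 2 ≤ numLeaves t + m := by
  have hdeep : (∀ p, IsInternalAt t p → ¬ SectorIn t p i) ↔ numLeaves t ≤ i + 1 := by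
    have := (exists_isInternalAt_sectorIn_iff (t := t) (i := i)).not
    push Not at this
    rw [this]
    omega
  have hroot : SectorIn (addRoot t m) [] i ↔ i + 2 ≤ numLeaves t + m := by
    simp [SectorIn, leavesBefore_nil, subtree!, subtreeAt, numLeaves_addRoot]
  have hint : IsInternalAt (addRoot t m) [] := isInternalAt_nil_iff.2 (by simp [addRoot])
  simp [OwnsSector, forall_isInternalAt_addRoot_iff, sectorIn_addRoot_zero_cons_iff, hdeep, hroot,
    hint, and_comm]

theorem OwnsSector.add_two_le_numLeaves (h : OwnsSector t p i) : i + 2 ≤ numLeaves t :=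
  exists_isInternalAt_sectorIn_iff.1 ⟨p, h.1, h.2.1⟩

end AddRoot

section SectorLetters

variable {A : Type*} [Ring A]

open Classical in
/-- The letters of the word `w` placed in the sectors of `t` owned by the vertex `v`, i.e. the
subword of `w` supported on the block of `π(t)` attached to `v`. -/
noncomputable def sectorLetters (t : PTree) (w : List A) (v : List ℕ) : List A :=
  ((List.range w.length).filter fun i => OwnsSector t v i).map fun i => w.getD i 0

theorem phiPi_eq_finprod_sectorLetters (φ : A → ℂ) (t : PTree) (w : List A) :
    phiPi φ t w = ∏ᶠ v ∈ {v | IsInternalAt t v}, φ (sectorLetters t w v).prod := rfl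

variable {t : PTree} {u v : List A}

theorem sectorLetters_addRoot_zero_cons (hu : u.length + 1 = numLeaves t) (m : ℕ) (v : List A)
    (p : List ℕ) : sectorLetters (addRoot t m) (u ++ v) (0 :: p) = sectorLetters t u p := by
  classical
  have hright (j : ℕ) : ¬ OwnsSector t p (u.length + j) := fun h => by
    have := h.add_two_le_numLeaves
    omega
  simp only [sectorLetters, ownsSector_addRoot_zero_cons_iff, List.length_append, List.range_add,
    List.filter_append, List.filter_map, Function.comp_def, hright, decide_false,
    List.filter_false, List.map_nil, List.append_nil]
  refine List.map_congr_left fun i hi => ?_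
  exact List.getD_append _ _ _ _ (List.mem_range.1 (List.mem_of_mem_filter hi))

theorem sectorLetters_addRoot_nil (hu : u.length + 1 = numLeaves t) :
    sectorLetters (addRoot t v.length) (u ++ v) [] = v := by
  classical
  have hleft : (List.range u.length).filter
      (fun i => OwnsSector (addRoot t v.length) [] i) = [] := by
    refine List.filter_eq_nil_iff.2 fun i hi => ?_
    have hi := List.mem_range.1 hi
    simp only [ownsSector_addRoot_nil_iff, decide_eq_true_eq]
    omega
  have hright : (List.range v.length).filter
      (fun j => OwnsSector (addRoot t v.length) [] (u.length + j)) = List.range v.length := by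
    refine List.filter_eq_self.2 fun j hj => decide_eq_true ?_
    have hj := List.mem_range.1 hj
    rw [ownsSector_addRoot_nil_iff]
    omega
  rw [sectorLetters, List.length_append, List.range_add, List.filter_append, hleft,
    List.filter_map, Function.comp_def, hright, List.nil_append, List.map_map]
  refine List.ext_getElem (by simp) fun j _ hj => ?_
  simp [hj]

theorem phiPi_addRoot (φ : A → ℂ) (hu : u.length + 1 = numLeaves t) :
    phiPi φ (addRoot t v.length) (u ++ v) = phiPi φ t u * φ v.prod := by
  have hroot : [] ∉ List.cons 0 '' {p | IsInternalAt t p} := by simp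
  rw [phiPi_eq_finprod_sectorLetters, setOf_isInternalAt_addRoot,
    finprod_mem_insert _ hroot (t.finite_setOf_isInternalAt.image _),
    finprod_mem_image List.cons_injective.injOn, sectorLetters_addRoot_nil hu, mul_comm]
  simp only [sectorLetters_addRoot_zero_cons hu]
  rfl

end SectorLetters

/-- The tree whose internal vertices form its left spine and have, from bottom to top, `m + 1`
children for the successive entries `m` of `ms`. With this order the blocks of `π(leftComb ms)` are
consecutive intervals whose sizes, from left to right, are the entries of `ms`. -/
def leftComb (ms : List ℕ) : PTree := ms.foldl addRoot leaf

section LeftComb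

variable {ms : List ℕ}

theorem leftComb_append_singleton (ms : List ℕ) (m : ℕ) :
    leftComb (ms ++ [m]) = addRoot (leftComb ms) m := by
  rw [leftComb, List.foldl_append]
  rfl

theorem graftLeftmost_leftComb (ms : List ℕ) (s : PTree) :
    graftLeftmost (leftComb ms) s = ms.foldl addRoot s := by
  induction ms using List.reverseRecOn with
  | nil => rfl
  | append_singleton ms m ih =>
    rw [leftComb_append_singleton, List.foldl_append, ← ih]
    simp only [addRoot, graftLeftmost, List.foldl_cons, List.foldl_nil]

theorem graftLeftmost_leftComb_corolla (ms : List ℕ) (m : ℕ) :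
    graftLeftmost (leftComb ms) (corolla (m + 1)) = leftComb (m :: ms) :=
  graftLeftmost_leftComb ms _

theorem isBST_iff_exists_leftComb {t : PTree} :
    IsBST t ↔ ∃ ms, (∀ m ∈ ms, 0 < m) ∧ leftComb ms = t := by
  constructor
  · intro h
    induction h with
    | single => exact ⟨[], by simp, rfl⟩
    | graft t m _ hm ih =>
      obtain ⟨ms, hms, rfl⟩ := ih
      obtain ⟨k, rfl⟩ := Nat.exists_eq_add_of_le' hm
      exact ⟨(k + 1) :: ms, by simpa using hms, (graftLeftmost_leftComb_corolla ms _).symm⟩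
  · rintro ⟨ms, hms, rfl⟩
    induction ms with
    | nil => exact .single
    | cons m ms ih =>
      obtain ⟨hm, hms⟩ := List.forall_mem_cons.1 hms
      rw [← graftLeftmost_leftComb_corolla]
      exact .graft _ _ (ih hms) (Nat.succ_le_succ hm)

theorem isSchroder_leftComb (hms : ∀ m ∈ ms, 0 < m) : IsSchroder (leftComb ms) := by
  induction ms using List.reverseRecOn with
  | nil => exact .leaf
  | append_singleton ms m ih =>
    simp only [List.forall_mem_append, List.forall_mem_singleton] at hms
    rw [leftComb_append_singleton]
    have hlen : 2 ≤ (leftComb ms :: List.replicate m leaf).length := by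
      simpa using Nat.succ_le_of_lt hms.2
    refine .node _ hlen (List.forall_mem_cons.2 ⟨ih hms.1, fun c hc => ?_⟩)
    exact List.eq_of_mem_replicate hc ▸ .leaf

theorem leftComb_injective : Function.Injective leftComb := by
  intro ms ms' h
  induction ms using List.reverseRecOn generalizing ms' with
  | nil =>
    rcases ms'.eq_nil_or_concat' with rfl | ⟨ms', m', rfl⟩
    · rfl
    · simp [addRoot, leftComb] at h
  | append_singleton ms m ih =>
    rcases ms'.eq_nil_or_concat' with rfl | ⟨ms', m', rfl⟩
    · simp [addRoot, leftComb] at h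
    · simp only [leftComb_append_singleton, addRoot, node.injEq, List.cons.injEq,
        List.replicate_inj] at h
      rw [ih h.1, h.2.1]

theorem numLeaves_leftComb (ms : List ℕ) : numLeaves (leftComb ms) = ms.sum + 1 := by
  induction ms using List.reverseRecOn with
  | nil => exact numLeaves_leaf
  | append_singleton ms m ih =>
    rw [leftComb_append_singleton, numLeaves_addRoot, ih, List.sum_append, List.sum_singleton]
    omega

theorem numInternal_leftComb (ms : List ℕ) : numInternal (leftComb ms) = ms.length := by
  induction ms using List.reverseRecOn with
  | nil => exact numInternal_leaf
  | append_singleton ms m ih =>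
    rw [leftComb_append_singleton, numInternal_addRoot, ih, List.length_append,
      List.length_singleton]

theorem phiPi_leftComb {A : Type*} [Ring A] (φ : A → ℂ) (L : List (List A)) :
    phiPi φ (leftComb (L.map List.length)) L.flatten = (L.map fun u => φ u.prod).prod := by
  induction L using List.reverseRecOn with
  | nil => simp [phiPi, leftComb, IsInternalAt, subtreeAt_leaf_eq_some_iff]
  | append_singleton L u ih =>
    have hlen : L.flatten.length + 1 = numLeaves (leftComb (L.map List.length)) := by
      rw [numLeaves_leftComb, List.length_flatten]
    rw [List.map_append, List.map_singleton, leftComb_append_singleton, List.flatten_append,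
      List.flatten_singleton, phiPi_addRoot φ hlen, ih, List.map_append, List.map_singleton,
      List.prod_append, List.prod_singleton]

theorem phiPi_leftComb_blocks {A : Type*} [Ring A] (φ : A → ℂ) (l : List A)
    (c : Composition l.length) :
    phiPi φ (leftComb c.blocks) l = ((l.splitWrtComposition c).map fun u => φ u.prod).prod := by
  rw [← phiPi_leftComb, List.map_length_splitWrtComposition, List.flatten_splitWrtComposition]

theorem setOf_isBST_mem_ST_eq_range (n : ℕ) :
    {t | IsBST t ∧ t ∈ ST n} = Set.range fun c : Composition n => leftComb c.blocks := by
  ext t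
  constructor
  · rintro ⟨hbst, -, hn⟩
    obtain ⟨ms, hms, rfl⟩ := isBST_iff_exists_leftComb.1 hbst
    rw [numLeaves_leftComb, Nat.add_right_cancel_iff] at hn
    exact ⟨⟨ms, @hms, hn⟩, rfl⟩
  · rintro ⟨c, rfl⟩
    have hpos : ∀ m ∈ c.blocks, 0 < m := fun _ => c.blocks_pos
    exact ⟨isBST_iff_exists_leftComb.2 ⟨_, hpos, rfl⟩, isSchroder_leftComb hpos, by
      rw [numLeaves_leftComb, c.blocks_sum]⟩

end LeftComb

end PTree

section Moments

variable {A : Type*}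

theorem finsum_isBST_eq_neg_compositionSum [Ring A] (φ : A → ℂ) {l : List A} (hl : l ≠ []) :
    ∑ᶠ t ∈ {t | PTree.IsBST t ∧ t ∈ PTree.ST l.length},
        (-1 : ℂ) ^ (PTree.numInternal t - 1) * PTree.phiPi φ t l =
      -compositionSum (-fun u => φ u.prod) l := by
  have hinj : Function.Injective fun c : Composition l.length => PTree.leftComb c.blocks :=
    fun _ _ h => Composition.ext (PTree.leftComb_injective h)
  rw [PTree.setOf_isBST_mem_ST_eq_range, finsum_mem_range hinj, finsum_eq_sum_of_fintype,
    compositionSum_neg, ← Finset.sum_neg_distrib]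
  refine Finset.sum_congr rfl fun c _ => ?_
  have hlen : c.length ≠ 0 := (c.length_pos_of_pos (List.length_pos_iff.2 hl)).ne'
  rw [PTree.numInternal_leftComb, c.blocks_length, PTree.phiPi_leftComb_blocks,
    ← mul_pow_sub_one hlen (-1 : ℂ)]
  ring

theorem finsum_isIntervalPart_eq_compositionSum (b : List A → ℂ) {n : ℕ} (a : Fin n → A) :
    ∑ᶠ π ∈ {π : NPart n | IsIntervalPart π}, blockApply b a π =
      compositionSum b (List.ofFn a) := by
  classical
  have hset : {π : NPart n | IsIntervalPart π} =
      ({π | IsIntervalFinpartition π} : Finset (NPart n)) := by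
    ext π
    simp [IsIntervalPart, IsIntervalFinpartition]
  rw [hset, finsum_mem_coe_finset, List.ofFn_eq_map, ← Fin.sort_univ,
    ← intervalSum_sort_map_eq_compositionSum, intervalSum]
  rfl

theorem BooleanMC.map_prod_eq_compositionSum [Ring A] {φ : A → ℂ} {b : List A → ℂ}
    (h : BooleanMC φ b) (l : List A) (hl : l ≠ []) :
    φ l.prod = compositionSum b l := by
  have := h l.length (List.length_pos_iff.2 hl) l.get
  rwa [finsum_isIntervalPart_eq_compositionSum, List.ofFn_get] at this

end Moments

theorem boolean_cumulants_eq_sum_BST_trees_general {A : Type*} [Ring A] (φ : A → ℂ)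
    (b : List A → ℂ) (hmc : BooleanMC φ b) (n : ℕ) (hn : 1 ≤ n) (a : Fin n → A) :
    b (List.ofFn a) =
      ∑ᶠ t ∈ {t | PTree.IsBST t ∧ t ∈ PTree.ST n},
        (-1 : ℂ) ^ (PTree.numInternal t - 1) * PTree.phiPi φ t (List.ofFn a) := by
  have ha : List.ofFn a ≠ [] := by simpa [List.ofFn_eq_nil_iff] using Nat.one_le_iff_ne_zero.1 hn
  rw [eq_neg_compositionSum_neg hmc.map_prod_eq_compositionSum _ ha,
    ← finsum_isBST_eq_neg_compositionSum φ ha, List.length_ofFn]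

/-- Boolean cumulants in terms of moments indexed by the Schröder trees
in `BST(n)`: `b_n(a_1,…,a_n) = Σ_{t ∈ BST(n)} (−1)^{i(t)−1} φ_{π(t)}(a_1,…,a_n)`. -/
theorem boolean_cumulants_eq_sum_BST_trees
    (A : Type*) [Ring A] [Algebra ℂ A] (φ : A →ₗ[ℂ] ℂ) (hφ : φ 1 = 1)
    (b : List A → ℂ) (hmc : BooleanMC (fun x => φ x) b)
    (n : ℕ) (hn : 1 ≤ n) (a : Fin n → A) :
    b (List.ofFn a) =
      ∑ᶠ t ∈ {t | PTree.IsBST t ∧ t ∈ PTree.ST n},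
        (-1 : ℂ) ^ (PTree.numInternal t - 1) * PTree.phiPi (fun x => φ x) t (List.ofFn a) := by
  exact boolean_cumulants_eq_sum_BST_trees_general (fun x => φ x) b hmc n hn a
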